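/- For each unordered pair {α,β} in {{132,213}, {231,312}} of patterns of length three, the number of permutations of {1,…,n} that contain α exactly once and contain β exactly once is s_n(∅;{α,β}) = (n²+21n−28)·2^{n−9} for all n ≥ 7, with s_6(∅;{α,β}) = 17, s_5(∅;{α,β}) = 6, and s_4(∅;{α,β}) = 3. -/

import Mathlib

/-- Number of occurrences of the pattern `α ∈ S_k` in the permutation `π ∈ S_n`:
the number of strictly increasing choices of `k` indices such that the corresponding
subword of `π` is order-isomorphic to `α`. -/
noncomputable def occCount {k n : ℕ} (α : Equiv.Perm (Fin k)) (π : Equiv.Perm (Fin n)) : ℕ :=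
  Nat.card {f : Fin k → Fin n // StrictMono f ∧ ∀ a b : Fin k, α a < α b ↔ π (f a) < π (f b)}

/-- `π` avoids the pattern `α`. -/
def avoids {k n : ℕ} (α : Equiv.Perm (Fin k)) (π : Equiv.Perm (Fin n)) : Prop :=
  occCount α π = 0

/-- `π` contains the pattern `α` exactly once. -/
def containsOnce {k n : ℕ} (α : Equiv.Perm (Fin k)) (π : Equiv.Perm (Fin n)) : Prop :=
  occCount α π = 1

/-- The pattern `123` (as a permutation of `Fin 3`, 0-indexed). -/
def p123 : Equiv.Perm (Fin 3) := ⟨![0,1,2], ![0,1,2], by decide, by decide⟩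
/-- The pattern `132`. -/
def p132 : Equiv.Perm (Fin 3) := ⟨![0,2,1], ![0,2,1], by decide, by decide⟩
/-- The pattern `213`. -/
def p213 : Equiv.Perm (Fin 3) := ⟨![1,0,2], ![1,0,2], by decide, by decide⟩
/-- The pattern `231`. -/
def p231 : Equiv.Perm (Fin 3) := ⟨![1,2,0], ![2,0,1], by decide, by decide⟩
/-- The pattern `312`. -/
def p312 : Equiv.Perm (Fin 3) := ⟨![2,0,1], ![1,2,0], by decide, by decide⟩
/-- The pattern `321`. -/
def p321 : Equiv.Perm (Fin 3) := ⟨![2,1,0], ![2,1,0], by decide, by decide⟩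

/-- `s_n(α;β)`: the number of permutations of `{1,…,n}` that avoid `α` and contain `β`
exactly once. -/
noncomputable def sAvoidContain (α β : Equiv.Perm (Fin 3)) (n : ℕ) : ℕ :=
  Nat.card {π : Equiv.Perm (Fin n) // avoids α π ∧ containsOnce β π}

/-- `s_n(∅;{α,β})`: the number of permutations of `{1,…,n}` that contain each of `α` and `β`
exactly once. -/
noncomputable def sContainBoth (α β : Equiv.Perm (Fin 3)) (n : ℕ) : ℕ :=
  Nat.card {π : Equiv.Perm (Fin n) // containsOnce α π ∧ containsOnce β π}

/-!
Extend permutations of `{0, …, n - 1}` to `ℕ` by fixed points. If such a word contains each of 231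
and 312 at most once, its first entries are forced to form a decreasing permutation, 231, 312, 2413,
3142 or 4231: a case analysis on the first entry, the position of 0, and the few entries between
them. As this block is sum-indecomposable, it splits off uniquely, `π = B ⊕ σ`, and occurrences of
231 and 312 in `π` lie entirely in `B` or entirely in `σ`. Weighting each occurrence of 231 by `x`
and each occurrence of 312 by `y`, where `x² = y² = 0`, the enumerators `W n` therefore satisfy
`W (n + 4) = ∑_{j < n + 4} W j + (x + y) W (n + 1) + 3xy W n`. The required numbers are the
coefficients of `xy`, which the iterated dual numbers `ℤ[ε][ε]` detect. Reversal of words turns 231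
and 312 into 132 and 213.
-/

section Occurrence

variable {ι κ : Type*} [LinearOrder ι] [LinearOrder κ] {k n : ℕ}

/-- The index choice `f` is an occurrence of the pattern `α` in the word `π`. Words over arbitrary
linear orders are allowed so that the notion also applies to permutations of `ℕ`. -/
def IsOccurrence (α : Equiv.Perm (Fin k)) (π : ι → κ) (f : Fin k → ι) : Prop :=
  StrictMono f ∧ ∀ a b, α a < α b ↔ π (f a) < π (f b)

/-- The word `π` contains the pattern `α` at most once; unlike `occCount α π ≤ 1`, this makes sense
for infinite words. -/
def ContainsAtMostOnce (α : Equiv.Perm (Fin k)) (π : ι → κ) : Prop :=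
  {f | IsOccurrence α π f}.Subsingleton

theorem occCount_eq_ncard (α : Equiv.Perm (Fin k)) (π : Equiv.Perm (Fin n)) :
    occCount α π = {f | IsOccurrence α π f}.ncard :=
  rfl

theorem isOccurrence_comp_iff {ι' κ' : Type*} [LinearOrder ι'] [LinearOrder κ']
    {α : Equiv.Perm (Fin k)} {π : ι → κ} {π' : ι' → κ'} {e : ι' → ι} {e' : κ' → κ}
    (he : StrictMono e) (he' : StrictMono e') (h : ∀ i, π (e i) = e' (π' i)) {f : Fin k → ι'} :
    IsOccurrence α π (e ∘ f) ↔ IsOccurrence α π' f := by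
  simp [IsOccurrence, StrictMono, h, he.lt_iff_lt, he'.lt_iff_lt]

theorem isOccurrence_iff_strictMono {α : Equiv.Perm (Fin k)} {π : ι → κ} {f : Fin k → ι} :
    IsOccurrence α π f ↔ StrictMono f ∧ StrictMono (π ∘ f ∘ α.symm) := by
  refine and_congr_right fun _ => ⟨fun h a b hab => ?_, fun h a b => ?_⟩
  · exact (h _ _).1 (by simpa using hab)
  · simpa using (h.lt_iff_lt (a := α a) (b := α b)).symm

theorem IsOccurrence.symm {α : Equiv.Perm (Fin k)} {π : Equiv.Perm ι} {f : Fin k → ι}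
    (hf : IsOccurrence α π f) : IsOccurrence α.symm π.symm (π ∘ f ∘ α.symm) := by
  rw [isOccurrence_iff_strictMono] at hf ⊢
  refine ⟨hf.2, ?_⟩
  convert hf.1 using 1
  ext
  simp

theorem ContainsAtMostOnce.symm {α : Equiv.Perm (Fin k)} {π : Equiv.Perm ι}
    (h : ContainsAtMostOnce α π) : ContainsAtMostOnce α.symm π.symm := by
  intro f hf g hg
  have hfg := h (by simpa using hf.symm) (by simpa using hg.symm)
  ext a
  simpa using congrFun hfg (α.symm a)

theorem IsOccurrence.mul_revPerm {α : Equiv.Perm (Fin k)} {π : Equiv.Perm (Fin n)}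
    {f : Fin k → Fin n} (hf : IsOccurrence α π f) :
    IsOccurrence (α * Fin.revPerm) (π * Fin.revPerm : Equiv.Perm (Fin n))
      (Fin.rev ∘ f ∘ Fin.rev) := by
  refine ⟨fun a b hab => ?_, fun a b => ?_⟩
  · simpa [hf.1.lt_iff_lt] using hab
  · simp [hf.2]

theorem occCount_mul_revPerm (α : Equiv.Perm (Fin k)) (π : Equiv.Perm (Fin n)) :
    occCount (α * Fin.revPerm) (π * Fin.revPerm) = occCount α π := by
  have rev_rev {l : ℕ} (τ : Equiv.Perm (Fin l)) : τ * Fin.revPerm * Fin.revPerm = τ := by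
    ext; simp
  symm
  rw [occCount_eq_ncard, occCount_eq_ncard]
  refine Set.ncard_congr (fun f _ => Fin.rev ∘ f ∘ Fin.rev)
    (fun f (hf : IsOccurrence α π f) => hf.mul_revPerm) ?_ ?_
  · intro f g _ _ hfg
    funext a
    simpa using congrFun hfg a.rev
  · intro g (hg : IsOccurrence _ _ g)
    have hg' : IsOccurrence α π (Fin.rev ∘ g ∘ Fin.rev) := by
      simpa only [rev_rev] using hg.mul_revPerm
    exact ⟨_, hg', by ext; simp⟩

theorem occCount_eq_zero_of_lt (α : Equiv.Perm (Fin k)) (π : Equiv.Perm (Fin n)) (h : n < k) :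
    occCount α π = 0 := by
  have : IsEmpty {f : Fin k → Fin n //
      StrictMono f ∧ ∀ a b : Fin k, α a < α b ↔ π (f a) < π (f b)} :=
    ⟨fun f => h.not_ge <| by simpa using Fintype.card_le_of_injective _ f.2.1.injective⟩
  exact Nat.card_of_isEmpty

theorem occCount_revPerm {α : Equiv.Perm (Fin k)} {a b : Fin k} (hab : a < b) (hα : α a < α b) :
    occCount α (Fin.revPerm : Equiv.Perm (Fin n)) = 0 := by
  rw [occCount_eq_ncard, Set.ncard_eq_zero, Set.eq_empty_iff_forall_notMem]
  rintro f ⟨hf, hf'⟩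
  have : f b < f a := by simpa using (hf' a b).1 hα
  exact this.not_gt (hf hab)

theorem sContainBoth_mul_revPerm (α β : Equiv.Perm (Fin 3)) (n : ℕ) :
    sContainBoth (α * Fin.revPerm) (β * Fin.revPerm) n = sContainBoth α β n :=
  (Nat.card_congr ((Equiv.mulRight Fin.revPerm).subtypeEquiv fun π => by
    simp only [containsOnce, Equiv.coe_mulRight, occCount_mul_revPerm])).symm

end Occurrence

section DirectSum

variable {k l m : ℕ}

/-- The direct sum `B ⊕ σ`: the word of `B` followed by the word of `σ` shifted up by `k`. -/
def directSum (B : Equiv.Perm (Fin k)) (σ : Equiv.Perm (Fin m)) : Equiv.Perm (Fin (k + m)) :=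
  finSumFinEquiv.permCongr (Equiv.Perm.sumCongr B σ)

@[simp]
theorem directSum_castAdd (B : Equiv.Perm (Fin k)) (σ : Equiv.Perm (Fin m)) (i : Fin k) :
    directSum B σ (Fin.castAdd m i) = Fin.castAdd m (B i) := by
  simp [directSum, Equiv.permCongr_apply]

@[simp]
theorem directSum_natAdd (B : Equiv.Perm (Fin k)) (σ : Equiv.Perm (Fin m)) (i : Fin m) :
    directSum B σ (Fin.natAdd k i) = Fin.natAdd k (σ i) := by
  simp [directSum, Equiv.permCongr_apply]

theorem directSum_right_injective (B : Equiv.Perm (Fin k)) :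
    Function.Injective (directSum B : Equiv.Perm (Fin m) → Equiv.Perm (Fin (k + m))) := by
  intro σ τ h
  ext i
  simpa using congrArg Fin.val (DFunLike.congr_fun h (Fin.natAdd k i))

theorem exists_directSum_eq {B : Equiv.Perm (Fin k)} {π : Equiv.Perm (Fin (k + m))}
    (h : ∀ i, π (Fin.castAdd m i) = Fin.castAdd m (B i)) : ∃ σ, directSum B σ = π := by
  have hmem : finSumFinEquiv.symm.permCongr π ∈
      (Equiv.Perm.sumCongrHom (Fin k) (Fin m)).range := by
    apply Equiv.Perm.mem_sumCongrHom_range_of_perm_mapsTo_inl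
    rintro _ ⟨i, rfl⟩
    exact ⟨B i, by simp [Equiv.permCongr_apply, h]⟩
  obtain ⟨⟨C, σ⟩, hC⟩ := hmem
  have hπ : directSum C σ = π := by
    rw [directSum, show Equiv.Perm.sumCongr C σ = finSumFinEquiv.symm.permCongr π from hC]
    ext; simp [Equiv.permCongr_apply]
  obtain rfl : C = B := by
    ext i
    simpa [← hπ] using congrArg Fin.val (h i)
  exact ⟨σ, hπ⟩

/-- A nonempty permutation is sum-indecomposable if it is not a direct sum of two shorter ones:
no cut `j` puts all smaller entries before all larger ones. -/
def SumIndecomposable (α : Equiv.Perm (Fin k)) : Prop :=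
  0 < k ∧ ∀ j : Fin k, 0 < (j : ℕ) → ∃ a < j, ∃ b ≥ j, α b < α a

instance (α : Equiv.Perm (Fin k)) : Decidable (SumIndecomposable α) :=
  inferInstanceAs (Decidable (_ ∧ _))

theorem sumIndecomposable_revPerm : SumIndecomposable (Fin.revPerm : Equiv.Perm (Fin (k + 1))) :=
  ⟨k.succ_pos, fun j hj => ⟨0, hj, j, le_rfl, Fin.rev_lt_rev.2 hj⟩⟩

theorem SumIndecomposable.exists_eq_comp_of_isOccurrence_directSum {α : Equiv.Perm (Fin l)}
    (hα : SumIndecomposable α) {B : Equiv.Perm (Fin k)} {σ : Equiv.Perm (Fin m)}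
    {f : Fin l → Fin (k + m)} (hf : IsOccurrence α (directSum B σ) f) :
    (∃ g, Fin.castAdd m ∘ g = f) ∨ ∃ g, Fin.natAdd k ∘ g = f := by
  have castAdd_of_lt {i : Fin (k + m)} (hi : (i : ℕ) < k) : ∃ i', Fin.castAdd m i' = i :=
    ⟨⟨i, hi⟩, rfl⟩
  have natAdd_of_le {i : Fin (k + m)} (hi : k ≤ i) : ∃ i', Fin.natAdd k i' = i :=
    ⟨_, Fin.natAdd_subNat_cast hi⟩
  by_cases hlow : ∀ a, (f a : ℕ) < k
  · choose g hg using fun a => castAdd_of_lt (hlow a)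
    exact .inl ⟨g, funext hg⟩
  have hex : ∃ j, k ≤ (f j : ℕ) := by simpa only [not_forall, not_lt] using hlow
  obtain ⟨j, hj, hmin⟩ := WellFounded.has_min wellFounded_lt {j | k ≤ (f j : ℕ)} hex
  have hhigh (a) (ha : j ≤ a) : k ≤ (f a : ℕ) :=
    le_trans hj (Fin.le_def.1 (hf.1.monotone ha))
  rcases Nat.eq_zero_or_pos j with hj0 | hj0
  · choose g hg using fun a => natAdd_of_le (hhigh a (Fin.le_def.2 (by omega)))
    exact .inr ⟨g, funext hg⟩
  obtain ⟨a, ha, b, hb, hba⟩ := hα.2 j hj0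
  obtain ⟨a', ha'⟩ := castAdd_of_lt (not_le.1 fun h => hmin a h ha)
  obtain ⟨b', hb'⟩ := natAdd_of_le (hhigh b hb)
  have hcross := (hf.2 b a).1 hba
  rw [← ha', ← hb', directSum_natAdd, directSum_castAdd, Fin.lt_def] at hcross
  simp at hcross
  omega

theorem SumIndecomposable.occCount_directSum {α : Equiv.Perm (Fin l)} (hα : SumIndecomposable α)
    (B : Equiv.Perm (Fin k)) (σ : Equiv.Perm (Fin m)) :
    occCount α (directSum B σ) = occCount α B + occCount α σ := by
  have hleft (g) : IsOccurrence α (directSum B σ) (Fin.castAdd m ∘ g) ↔ IsOccurrence α B g :=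
    isOccurrence_comp_iff (Fin.strictMono_castAdd m) (Fin.strictMono_castAdd m)
      (directSum_castAdd B σ)
  have hright (g) : IsOccurrence α (directSum B σ) (Fin.natAdd k ∘ g) ↔ IsOccurrence α σ g :=
    isOccurrence_comp_iff (Fin.strictMono_natAdd k) (Fin.strictMono_natAdd k)
      (directSum_natAdd B σ)
  have hunion : {f | IsOccurrence α (directSum B σ) f} =
      (Fin.castAdd m ∘ ·) '' {g | IsOccurrence α B g} ∪
        (Fin.natAdd k ∘ ·) '' {g | IsOccurrence α σ g} := by
    ext f
    constructor
    · intro hf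
      rcases hα.exists_eq_comp_of_isOccurrence_directSum hf with ⟨g, rfl⟩ | ⟨g, rfl⟩
      · exact .inl ⟨g, (hleft g).1 hf, rfl⟩
      · exact .inr ⟨g, (hright g).1 hf, rfl⟩
    · rintro (⟨g, hg, rfl⟩ | ⟨g, hg, rfl⟩)
      · exact (hleft g).2 hg
      · exact (hright g).2 hg
  have hdisj : Disjoint ((Fin.castAdd m ∘ ·) '' {g | IsOccurrence α B g})
      ((Fin.natAdd k ∘ ·) '' {g | IsOccurrence α σ g}) := by
    rw [Set.disjoint_left]
    rintro _ ⟨g, -, rfl⟩ ⟨h, -, hgh⟩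
    have := congrArg Fin.val (congrFun hgh ⟨0, hα.1⟩)
    simp only [Function.comp_apply, Fin.val_natAdd, Fin.val_castAdd] at this
    omega
  rw [occCount_eq_ncard, hunion, Set.ncard_union_eq hdisj,
    Set.ncard_image_of_injective _ (Fin.castAdd_injective k m).comp_left,
    Set.ncard_image_of_injective _ (Fin.natAdd_injective m k).comp_left]
  rfl

end DirectSum

section Prefix

variable {k l m n : ℕ}

/-- The extension of a permutation of `Fin n` to `ℕ` fixing every `i ≥ n`, so that the entries of
`π` can be addressed by numerals. -/
def natExt (π : Equiv.Perm (Fin n)) : Equiv.Perm ℕ :=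
  π.extendDomain Fin.equivSubtype

theorem natExt_val (π : Equiv.Perm (Fin n)) (i : Fin n) : natExt π i = π i :=
  π.extendDomain_apply_image Fin.equivSubtype i

theorem natExt_of_le (π : Equiv.Perm (Fin n)) {i : ℕ} (h : n ≤ i) : natExt π i = i :=
  π.extendDomain_apply_not_subtype Fin.equivSubtype h.not_gt

theorem natExt_lt (π : Equiv.Perm (Fin n)) {i : ℕ} (h : i < n) : natExt π i < n := by
  simpa only [← natExt_val] using (π ⟨i, h⟩).isLt

theorem lt_of_natExt_lt {π : Equiv.Perm (Fin n)} {i j : ℕ} (hij : i ≤ j)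
    (h : natExt π j < natExt π i) : j < n := by
  by_contra! hj
  rw [natExt_of_le π hj] at h
  rcases lt_or_ge i n with hi | hi
  · have := natExt_lt π hi
    omega
  · rw [natExt_of_le π hi] at h
    omega

theorem containsAtMostOnce_natExt {α : Equiv.Perm (Fin (k + 1))} (hα : α (Fin.last k) < α 0)
    {π : Equiv.Perm (Fin n)} (h : occCount α π ≤ 1) : ContainsAtMostOnce α (natExt π) := by
  have factor {f} (hf : IsOccurrence α (natExt π) f) : ∃ g : Fin (k + 1) → Fin n, Fin.val ∘ g = f :=
    have hlast := lt_of_natExt_lt (hf.1.monotone (Fin.zero_le _)) ((hf.2 _ _).1 hα)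
    ⟨fun a => ⟨f a, (hf.1.monotone (Fin.le_last a)).trans_lt hlast⟩, rfl⟩
  have occ_iff (g : Fin (k + 1) → Fin n) :
      IsOccurrence α (natExt π) (Fin.val ∘ g) ↔ IsOccurrence α π g :=
    isOccurrence_comp_iff Fin.val_strictMono Fin.val_strictMono (natExt_val π)
  rw [occCount_eq_ncard, Set.ncard_le_one] at h
  intro f hf f' hf'
  obtain ⟨g, rfl⟩ := factor hf
  obtain ⟨g', rfl⟩ := factor hf'
  rw [h g ((occ_iff g).1 hf) g' ((occ_iff g').1 hf')]

/-- The infinite word `f` starts with the word of `B`. -/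
def IsPrefix (B : Equiv.Perm (Fin k)) (f : ℕ → ℕ) : Prop :=
  ∀ i : Fin k, f i = B i

instance (B : Equiv.Perm (Fin k)) (f : ℕ → ℕ) : Decidable (IsPrefix B f) :=
  inferInstanceAs (Decidable (∀ i : Fin k, f i = B i))

theorem IsPrefix.length_le {B : Equiv.Perm (Fin k)} {C : Equiv.Perm (Fin l)} {f : Equiv.Perm ℕ}
    (hB : IsPrefix B f) (hC : IsPrefix C f) (hk : 0 < k) (hC' : SumIndecomposable C) : l ≤ k := by
  by_contra! hkl
  obtain ⟨a, ha, b, hb, hba⟩ := hC'.2 ⟨k, hkl⟩ hk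
  have hCa : (C a : ℕ) < k := by
    rw [← hC a, hB ⟨a, ha⟩]
    exact (B _).isLt
  let c := B.symm ⟨C b, (Fin.lt_def.1 hba).trans hCa⟩
  have hcb : f c = f b := by
    rw [hB c, hC b, Equiv.apply_symm_apply]
  exact ((f.injective hcb).symm ▸ c.isLt).not_ge hb

theorem IsPrefix.sigma_eq {B : Equiv.Perm (Fin k)} {C : Equiv.Perm (Fin l)} {f : Equiv.Perm ℕ}
    (hB : IsPrefix B f) (hC : IsPrefix C f) (hB' : SumIndecomposable B)
    (hC' : SumIndecomposable C) :
    (⟨k, B⟩ : Σ k, Equiv.Perm (Fin k)) = ⟨l, C⟩ := by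
  obtain rfl : k = l := (hC.length_le hB hC'.1 hB').antisymm (hB.length_le hC hB'.1 hC')
  congr
  ext i
  rw [← hB i, hC i]

theorem isPrefix_natExt_self (π : Equiv.Perm (Fin n)) : IsPrefix π (natExt π) :=
  natExt_val π

theorem isPrefix_natExt_iff {B : Equiv.Perm (Fin k)} {π : Equiv.Perm (Fin (k + m))} :
    IsPrefix B (natExt π) ↔ ∃ σ, directSum B σ = π := by
  have natExt_castAdd (π : Equiv.Perm (Fin (k + m))) (i : Fin k) :
      natExt π i = π (Fin.castAdd m i) := natExt_val π (Fin.castAdd m i)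
  constructor
  · refine fun h => exists_directSum_eq fun i => Fin.ext ?_
    rw [← natExt_castAdd, h i, Fin.val_castAdd]
  · rintro ⟨σ, rfl⟩ i
    rw [natExt_castAdd, directSum_castAdd, Fin.val_castAdd]

theorem isPrefix_revPerm_iff {f : ℕ → ℕ} :
    IsPrefix (Fin.revPerm : Equiv.Perm (Fin (k + 1))) f ↔ ∀ i ≤ k, f i = k - i := by
  simp [IsPrefix, Fin.forall_iff, Fin.val_rev]

end Prefix

section FirstBlock

variable {f : Equiv.Perm ℕ}

/-- The permutation 2413. -/
def p2413 : Equiv.Perm (Fin 4) := ⟨![1, 3, 0, 2], ![2, 0, 3, 1], by decide, by decide⟩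

/-- The permutation 3142. -/
def p3142 : Equiv.Perm (Fin 4) := ⟨![2, 0, 3, 1], ![1, 3, 0, 2], by decide, by decide⟩

/-- The permutation 4231. -/
def p4231 : Equiv.Perm (Fin 4) := ⟨![3, 1, 2, 0], ![3, 1, 2, 0], by decide, by decide⟩

theorem p231_symm : p231.symm = p312 := by decide

theorem p312_symm : p312.symm = p231 := by decide

theorem ContainsAtMostOnce.eq_of_p231 {f : ℕ → ℕ} (h : ContainsAtMostOnce p231 f)
    {i j l i' j' l' : ℕ} (hij : i < j) (hjl : j < l) (hli : f l < f i) (hfij : f i < f j)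
    (hij' : i' < j') (hjl' : j' < l') (hli' : f l' < f i') (hfij' : f i' < f j') :
    i = i' ∧ j = j' ∧ l = l' := by
  have occ {i j l : ℕ} (hij : i < j) (hjl : j < l) (hli : f l < f i) (hfij : f i < f j) :
      IsOccurrence p231 f ![i, j, l] := by
    rw [isOccurrence_iff_strictMono]
    simp [Fin.strictMono_iff_lt_succ, Fin.forall_fin_succ, p231, hij, hjl, hli, hfij]
  simpa using h (occ hij hjl hli hfij) (occ hij' hjl' hli' hfij')

theorem ContainsAtMostOnce.eq_of_p312 {f : ℕ → ℕ} (h : ContainsAtMostOnce p312 f)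
    {i j l i' j' l' : ℕ} (hij : i < j) (hjl : j < l) (hfjl : f j < f l) (hli : f l < f i)
    (hij' : i' < j') (hjl' : j' < l') (hfjl' : f j' < f l') (hli' : f l' < f i') :
    i = i' ∧ j = j' ∧ l = l' := by
  have occ {i j l : ℕ} (hij : i < j) (hjl : j < l) (hfjl : f j < f l) (hli : f l < f i) :
      IsOccurrence p312 f ![i, j, l] := by
    rw [isOccurrence_iff_strictMono]
    simp [Fin.strictMono_iff_lt_succ, Fin.forall_fin_succ, p312, hij, hjl, hfjl, hli]
  simpa using h (occ hij hjl hfjl hli) (occ hij' hjl' hfjl' hli')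

theorem ContainsAtMostOnce.apply_one_eq_zero_or_apply_two_eq_zero
    (h : ContainsAtMostOnce p231 f) (h0 : f 0 = 1) : f 1 = 0 ∨ f 2 = 0 := by
  obtain ⟨p, hp⟩ := f.surjective 0
  by_contra! hne
  have hp3 : 3 ≤ p := by
    by_contra! hlt
    interval_cases p <;> omega
  have h1 : f 1 ≠ f 0 := f.injective.ne (by omega)
  have h2 : f 2 ≠ f 0 := f.injective.ne (by omega)
  have := h.eq_of_p231 (i := 0) (j := 1) (l := p) (i' := 0) (j' := 2) (l' := p)
  omega

theorem ContainsAtMostOnce.apply_one_eq_two_or_eq_three (h : ContainsAtMostOnce p312 f)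
    (h0 : f 0 = 1) (h2 : f 2 = 0) : f 1 = 2 ∨ f 1 = 3 := by
  obtain ⟨q, hq⟩ := f.surjective 2
  obtain ⟨r, hr⟩ := f.surjective 3
  have h10 : f 1 ≠ f 0 := f.injective.ne (by omega)
  have h12 : f 1 ≠ f 2 := f.injective.ne (by omega)
  by_contra! hne
  have hq3 : 3 ≤ q := by
    by_contra! hlt
    interval_cases q <;> omega
  have hr3 : 3 ≤ r := by
    by_contra! hlt
    interval_cases r <;> omega
  obtain rfl : q = r := (h.eq_of_p312 (i := 1) (j := 2) (l := q) (i' := 1) (j' := 2) (l' := r)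
    (by omega) (by omega) (by omega) (by omega) (by omega) (by omega) (by omega) (by omega)).2.2
  omega

theorem ContainsAtMostOnce.apply_three_eq_two (h : ContainsAtMostOnce p231 f)
    (h0 : f 0 = 1) (h1 : f 1 = 3) (h2 : f 2 = 0) : f 3 = 2 := by
  obtain ⟨q, hq⟩ := f.surjective 2
  have h30 : f 3 ≠ f 0 := f.injective.ne (by omega)
  have h31 : f 3 ≠ f 1 := f.injective.ne (by omega)
  have h32 : f 3 ≠ f 2 := f.injective.ne (by omega)
  by_contra! hne
  have hq4 : 4 ≤ q := by
    by_contra! hlt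
    interval_cases q <;> omega
  have := h.eq_of_p231 (i := 0) (j := 1) (l := 2) (i' := 1) (j' := 3) (l' := q)
  omega

theorem initial_values_of_apply_zero_eq_one (h231 : ContainsAtMostOnce p231 f)
    (h312 : ContainsAtMostOnce p312 f) (h0 : f 0 = 1) :
    f 1 = 0 ∨ (f 1 = 2 ∧ f 2 = 0) ∨ (f 1 = 3 ∧ f 2 = 0 ∧ f 3 = 2) := by
  rcases h231.apply_one_eq_zero_or_apply_two_eq_zero h0 with h1 | h2
  · exact .inl h1
  rcases h312.apply_one_eq_two_or_eq_three h0 h2 with h1 | h1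
  · exact .inr (.inl ⟨h1, h2⟩)
  · exact .inr (.inr ⟨h1, h2, h231.apply_three_eq_two h0 h1 h2⟩)

theorem ContainsAtMostOnce.apply_lt_apply_zero (h : ContainsAtMostOnce p231 f) (h0 : 2 ≤ f 0)
    {j : ℕ} (hj0 : 0 < j) (hj : j < f.symm 0) : f j < f 0 := by
  have hp : f (f.symm 0) = 0 := f.apply_symm_apply 0
  obtain ⟨q, hq⟩ := f.surjective 1
  have hj_ne : f j ≠ f 0 := f.injective.ne (by omega)
  by_contra! hle
  have hq_ne : q ≠ 0 ∧ q ≠ j ∧ q ≠ f.symm 0 := by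
    refine ⟨?_, ?_, ?_⟩ <;> intro h <;> rw [h] at hq <;> omega
  -- The entry 1 makes a second occurrence of 231 besides the one at the positions `0, j, f⁻¹ 0`.
  rcases lt_or_ge j q with hjq | hqj
  · have := h.eq_of_p231 (i := 0) (j := j) (l := f.symm 0) (i' := 0) (j' := j) (l' := q)
    omega
  · have := h.eq_of_p231 (i := 0) (j := j) (l := f.symm 0) (i' := q) (j' := j) (l' := f.symm 0)
    omega

theorem symm_zero_le_apply_zero (h231 : ContainsAtMostOnce p231 f) (h0 : 2 ≤ f 0) :
    f.symm 0 ≤ f 0 := by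
  have hmaps : Set.MapsTo f (Finset.Ioo 0 (f.symm 0)) (Finset.Ioo 0 (f 0)) := by
    intro j hj
    obtain ⟨hj0, hj⟩ := by simpa using hj
    have : f j ≠ 0 := fun h => hj.ne (f.symm_apply_eq.2 h.symm).symm
    have := h231.apply_lt_apply_zero h0 hj0 hj
    rw [Finset.coe_Ioo, Set.mem_Ioo]
    omega
  have := Finset.card_le_card_of_injOn f hmaps f.injective.injOn
  simp only [Nat.card_Ioo] at this
  omega

theorem symm_zero_eq_apply_zero (h231 : ContainsAtMostOnce p231 f)
    (h312 : ContainsAtMostOnce p312 f) (h0 : 2 ≤ f 0) (hp : 2 ≤ f.symm 0) : f.symm 0 = f 0 :=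
  (symm_zero_le_apply_zero h231 h0).antisymm
    (symm_zero_le_apply_zero (f := f.symm) (p312_symm ▸ h312.symm) hp)

theorem apply_eq_sub_of_strictAntiOn {f : ℕ → ℕ} {p : ℕ} (hf : StrictAntiOn f (Set.Iic p))
    (h0 : f 0 = p) {i : ℕ} (hi : i ≤ p) : f i = p - i := by
  have drop {i j : ℕ} (hij : i ≤ j) (hj : j ≤ p) : f j + (j - i) ≤ f i := by
    induction j, hij using Nat.le_induction with
    | base => simp
    | succ j hij ih =>
      have := hf (Set.mem_Iic.2 (by omega : j ≤ p)) (Set.mem_Iic.2 hj) j.lt_succ_self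
      have := ih (by omega)
      omega
  have := drop i.zero_le hi
  have := drop hi le_rfl
  omega

theorem initial_values_of_ascent (h231 : ContainsAtMostOnce p231 f)
    (h312 : ContainsAtMostOnce p312 f) (hp : f.symm 0 = f 0) {i j : ℕ}
    (hi : 0 < i) (hij : i < j) (hj : j < f.symm 0) (hasc : f i < f j) :
    f 0 = 3 ∧ f 1 = 1 ∧ f 2 = 2 ∧ f 3 = 0 := by
  have hf0 : f (f.symm 0) = 0 := f.apply_symm_apply 0
  have between {k : ℕ} (hk0 : 0 < k) (hk : k < f.symm 0) : 0 < f k ∧ f k < f 0 :=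
    ⟨Nat.pos_of_ne_zero fun h => hk.ne (f.symm_apply_eq.2 h.symm).symm,
      h231.apply_lt_apply_zero (by omega) hk0 hk⟩
  have hfi := between hi (by omega)
  have hfj := between (by omega) hj
  -- Followed by the entry 0, such an ascent forms an occurrence of 231.
  have ascent_unique {a b : ℕ} (ha : 0 < a) (hab : a < b) (hb : b < f.symm 0) (hfab : f a < f b) :
      i = a ∧ j = b := by
    have hfa := between ha (by omega)
    have := h231.eq_of_p231 (i := i) (j := j) (l := f.symm 0) (i' := a) (j' := b) (l' := f.symm 0)
    omega
  have eq_or_eq {k : ℕ} (hk0 : 0 < k) (hk : k < f.symm 0) : k = i ∨ k = j := by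
    by_contra! hne
    have := between hk0 hk
    have hfki : f k ≠ f i := f.injective.ne hne.1
    have hfkj : f k ≠ f j := f.injective.ne hne.2
    have hik := ascent_unique (a := i) (b := k)
    have hki := ascent_unique (a := k) (b := i)
    have hjk := ascent_unique (a := j) (b := k)
    have hkj := ascent_unique (a := k) (b := j)
    rcases lt_or_ge k i with hlt | hge
    · have := h312.eq_of_p312 (i := 0) (j := i) (l := j) (i' := k) (j' := i) (l' := j)
      omega
    · have := h231.eq_of_p231 (i := i) (j := j) (l := f.symm 0) (i' := i) (j' := j) (l' := k)
      omega
  have hi1 : i = 1 := by have := eq_or_eq (k := 1); omega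
  have hj2 : j = 2 := by have := eq_or_eq (k := 2); omega
  have hp3 : f.symm 0 = 3 := by have := eq_or_eq (k := 3); omega
  rw [hi1] at hfi hasc
  rw [hj2] at hfj hasc
  rw [hp3] at hf0
  omega

theorem initial_values_of_two_le (h231 : ContainsAtMostOnce p231 f)
    (h312 : ContainsAtMostOnce p312 f) (h0 : 2 ≤ f 0) (hp : 2 ≤ f.symm 0) :
    (∀ i ≤ f 0, f i = f 0 - i) ∨ (f 0 = 3 ∧ f 1 = 1 ∧ f 2 = 2 ∧ f 3 = 0) := by
  have hp0 : f.symm 0 = f 0 := symm_zero_eq_apply_zero h231 h312 h0 hp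
  by_cases hasc : ∃ i j, 0 < i ∧ i < j ∧ j < f.symm 0 ∧ f i < f j
  · obtain ⟨i, j, hi, hij, hj, hasc⟩ := hasc
    exact .inr (initial_values_of_ascent h231 h312 hp0 hi hij hj hasc)
  push Not at hasc
  refine .inl fun i hi => apply_eq_sub_of_strictAntiOn (fun i _ j hj hij => ?_) rfl hi
  have hne : f j ≠ f i := f.injective.ne hij.ne'
  rcases (Set.mem_Iic.1 hj).eq_or_lt with rfl | hj
  · rw [← hp0, f.apply_symm_apply] at hne ⊢
    omega
  rcases i.eq_zero_or_pos with rfl | hi0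
  · exact h231.apply_lt_apply_zero h0 hij (by omega)
  · exact lt_of_le_of_ne (hasc i j hi0 hij (by omega)) hne

theorem isPrefix_of_apply_zero_eq_one (h231 : ContainsAtMostOnce p231 f)
    (h312 : ContainsAtMostOnce p312 f) (h0 : f 0 = 1) :
    IsPrefix (Fin.revPerm : Equiv.Perm (Fin (f 0 + 1))) f ∨ IsPrefix p231 f ∨ IsPrefix p2413 f := by
  rcases initial_values_of_apply_zero_eq_one h231 h312 h0 with h1 | ⟨h1, h2⟩ | ⟨h1, h2, h3⟩
  · refine .inl (isPrefix_revPerm_iff.2 fun i hi => ?_)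
    rw [h0] at hi
    interval_cases i <;> omega
  · exact .inr (.inl (by simp [IsPrefix, Fin.forall_fin_succ, p231, h0, h1, h2]))
  · exact .inr (.inr (by simp [IsPrefix, Fin.forall_fin_succ, p2413, h0, h1, h2, h3]))

theorem isPrefix_of_apply_one_eq_zero (h231 : ContainsAtMostOnce p231 f)
    (h312 : ContainsAtMostOnce p312 f) (h1 : f 1 = 0) :
    IsPrefix (Fin.revPerm : Equiv.Perm (Fin (f 0 + 1))) f ∨ IsPrefix p312 f ∨ IsPrefix p3142 f := by
  have h0' : f.symm 0 = 1 := f.symm_apply_eq.2 h1.symm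
  have hcases := initial_values_of_apply_zero_eq_one (p312_symm ▸ h312.symm)
    (p231_symm ▸ h231.symm) h0'
  simp only [Equiv.symm_apply_eq, eq_comm (b := f _)] at hcases
  rcases hcases with h0 | ⟨h2, h0⟩ | ⟨h3, h0, h2⟩
  · refine .inl (isPrefix_revPerm_iff.2 fun i hi => ?_)
    rw [h0] at hi
    interval_cases i <;> omega
  · exact .inr (.inl (by simp [IsPrefix, Fin.forall_fin_succ, p312, h0, h1, h2]))
  · exact .inr (.inr (by simp [IsPrefix, Fin.forall_fin_succ, p3142, h0, h1, h2, h3]))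

theorem exists_isPrefix (h231 : ContainsAtMostOnce p231 f) (h312 : ContainsAtMostOnce p312 f) :
    IsPrefix (Fin.revPerm : Equiv.Perm (Fin (f 0 + 1))) f ∨ IsPrefix p231 f ∨ IsPrefix p312 f ∨
      IsPrefix p2413 f ∨ IsPrefix p3142 f ∨ IsPrefix p4231 f := by
  have hf0 : f (f.symm 0) = 0 := f.apply_symm_apply 0
  rcases (by omega : f 0 = 0 ∨ f 0 = 1 ∨ 2 ≤ f 0) with h0 | h0 | h0
  · refine .inl (isPrefix_revPerm_iff.2 fun i hi => ?_)
    obtain rfl : i = 0 := by omega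
    rw [Nat.sub_zero]
  · have := isPrefix_of_apply_zero_eq_one h231 h312 h0
    tauto
  rcases (by omega : f.symm 0 = 0 ∨ f.symm 0 = 1 ∨ 2 ≤ f.symm 0) with hp | hp | hp
  · rw [hp] at hf0
    omega
  · have := isPrefix_of_apply_one_eq_zero h231 h312 (hp ▸ hf0)
    tauto
  · rcases initial_values_of_two_le h231 h312 h0 hp with h | ⟨h0, h1, h2, h3⟩
    · exact .inl (isPrefix_revPerm_iff.2 h)
    · have : IsPrefix p4231 f := by simp [IsPrefix, Fin.forall_fin_succ, p4231, h0, h1, h2, h3]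
      tauto

end FirstBlock

section Enumerator

variable {R : Type*} [CommSemiring R] {x y : R} {k m n : ℕ}

theorem sumIndecomposable_p231 : SumIndecomposable p231 := by decide

theorem sumIndecomposable_p312 : SumIndecomposable p312 := by decide

/-- The monomial `x ^ i * y ^ j` recording the numbers `i` and `j` of occurrences of 231 and 312
in `π`. -/
noncomputable def occWeight (x y : R) (π : Equiv.Perm (Fin n)) : R :=
  x ^ occCount p231 π * y ^ occCount p312 π

/-- The joint enumerator of the occurrences of 231 and 312 over all permutations of length `n`. -/
noncomputable def occEnumerator (x y : R) (n : ℕ) : R :=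
  ∑ π : Equiv.Perm (Fin n), occWeight x y π

/-- The contribution to `occEnumerator x y n` of the permutations starting with the block `B`. -/
noncomputable def prefixEnumerator (x y : R) (B : Equiv.Perm (Fin k)) (n : ℕ) : R :=
  ∑ π : Equiv.Perm (Fin n) with IsPrefix B (natExt π), occWeight x y π

theorem occWeight_directSum (B : Equiv.Perm (Fin k)) (σ : Equiv.Perm (Fin m)) :
    occWeight x y (directSum B σ) = occWeight x y B * occWeight x y σ := by
  rw [occWeight, sumIndecomposable_p231.occCount_directSum,
    sumIndecomposable_p312.occCount_directSum, pow_add, pow_add, mul_mul_mul_comm]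
  rfl

theorem occWeight_eq_zero (hx : x ^ 2 = 0) (hy : y ^ 2 = 0) {π : Equiv.Perm (Fin n)}
    (h : 2 ≤ occCount p231 π ∨ 2 ≤ occCount p312 π) : occWeight x y π = 0 := by
  rcases h with h | h
  · rw [occWeight, pow_eq_zero_of_le h hx, zero_mul]
  · rw [occWeight, pow_eq_zero_of_le h hy, mul_zero]

theorem prefixEnumerator_of_le (B : Equiv.Perm (Fin k)) (h : k ≤ n) :
    prefixEnumerator x y B n = occWeight x y B * occEnumerator x y (n - k) := by
  obtain ⟨m, rfl⟩ := Nat.exists_eq_add_of_le h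
  have himage : Finset.univ.filter (fun π : Equiv.Perm (Fin (k + m)) => IsPrefix B (natExt π)) =
      Finset.univ.map ⟨directSum B, directSum_right_injective B⟩ := by
    ext π
    simp [isPrefix_natExt_iff]
  rw [prefixEnumerator, himage, Finset.sum_map, Nat.add_sub_cancel_left, occEnumerator,
    Finset.mul_sum]
  exact Finset.sum_congr rfl fun σ _ => occWeight_directSum B σ

theorem prefixEnumerator_of_lt {B : Equiv.Perm (Fin k)} (hB : SumIndecomposable B) (hn : 0 < n)
    (hnk : n < k) : prefixEnumerator x y B n = 0 := by
  rw [prefixEnumerator, Finset.filter_eq_empty_iff.2, Finset.sum_empty]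
  exact fun π _ hπ => hnk.not_ge ((isPrefix_natExt_self π).length_le hπ hn hB)

theorem occWeight_revPerm : occWeight x y (Fin.revPerm : Equiv.Perm (Fin n)) = 1 := by
  rw [occWeight, occCount_revPerm (a := 0) (b := 1) (by decide) (by decide),
    occCount_revPerm (a := 1) (b := 2) (by decide) (by decide), pow_zero, pow_zero, mul_one]

theorem occCount_eq_fintype_card (α : Equiv.Perm (Fin k)) (π : Equiv.Perm (Fin n)) :
    occCount α π = Fintype.card {f : Fin k → Fin n //
      (∀ a b, a < b → f a < f b) ∧ ∀ a b : Fin k, α a < α b ↔ π (f a) < π (f b)} :=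
  Nat.card_eq_fintype_card

theorem occWeight_p231 : occWeight x y p231 = x := by
  have h231 : occCount p231 p231 = 1 := by rw [occCount_eq_fintype_card]; decide
  have h312 : occCount p312 p231 = 0 := by rw [occCount_eq_fintype_card]; decide
  rw [occWeight, h231, h312, pow_one, pow_zero, mul_one]

theorem occWeight_p312 : occWeight x y p312 = y := by
  have h231 : occCount p231 p312 = 0 := by rw [occCount_eq_fintype_card]; decide
  have h312 : occCount p312 p312 = 1 := by rw [occCount_eq_fintype_card]; decide
  rw [occWeight, h231, h312, pow_one, pow_zero, one_mul]

theorem occWeight_of_mem_length_four {B : Equiv.Perm (Fin 4)} (hB : B ∈ [p2413, p3142, p4231]) :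
    occWeight x y B = x * y := by
  have h : occCount p231 B = 1 ∧ occCount p312 B = 1 := by
    rw [occCount_eq_fintype_card, occCount_eq_fintype_card]
    revert B
    decide
  rw [occWeight, h.1, h.2, pow_one, pow_one]

/-- The sum-indecomposable permutations, other than the decreasing ones, that contain each of 231
and 312 at most once. -/
def exceptionalBlocks : Finset (Σ k, Equiv.Perm (Fin k)) :=
  {⟨3, p231⟩, ⟨3, p312⟩, ⟨4, p2413⟩, ⟨4, p3142⟩, ⟨4, p4231⟩}

/-- The decreasing permutations of length at most `n`, as possible first blocks. -/
def decreasingBlocks (n : ℕ) : Finset (Σ k, Equiv.Perm (Fin k)) :=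
  (Finset.range n).image fun j => ⟨j + 1, Fin.revPerm⟩

theorem disjoint_decreasingBlocks_exceptionalBlocks (n : ℕ) :
    Disjoint (decreasingBlocks n) exceptionalBlocks := by
  have ne_revPerm : ∀ B ∈ exceptionalBlocks, B.2 ≠ Fin.revPerm := by decide
  rw [Finset.disjoint_left]
  intro B hB hB'
  obtain ⟨j, -, rfl⟩ := Finset.mem_image.1 hB
  exact ne_revPerm _ hB' rfl

theorem sumIndecomposable_of_mem_exceptionalBlocks :
    ∀ B ∈ exceptionalBlocks, SumIndecomposable B.2 := by
  decide

theorem sumIndecomposable_of_mem_blocks {B : Σ k, Equiv.Perm (Fin k)}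
    (hB : B ∈ decreasingBlocks n ∪ exceptionalBlocks) : SumIndecomposable B.2 := by
  rcases Finset.mem_union.1 hB with hB | hB
  · obtain ⟨j, -, rfl⟩ := Finset.mem_image.1 hB
    exact sumIndecomposable_revPerm
  · exact sumIndecomposable_of_mem_exceptionalBlocks B hB

theorem existsUnique_isPrefix {π : Equiv.Perm (Fin (n + 1))} (h231 : occCount p231 π ≤ 1)
    (h312 : occCount p312 π ≤ 1) :
    ∃! B, B ∈ decreasingBlocks (n + 1) ∪ exceptionalBlocks ∧ IsPrefix B.2 (natExt π) := by
  have hex : ∃ B ∈ decreasingBlocks (n + 1) ∪ exceptionalBlocks, IsPrefix B.2 (natExt π) := by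
    have hdecr : (⟨natExt π 0 + 1, Fin.revPerm⟩ : Σ k, Equiv.Perm (Fin k)) ∈
        decreasingBlocks (n + 1) :=
      Finset.mem_image_of_mem _ (Finset.mem_range.2 (natExt_lt π n.succ_pos))
    rcases exists_isPrefix (containsAtMostOnce_natExt (by decide) h231)
      (containsAtMostOnce_natExt (by decide) h312) with h | h | h | h | h | h
    · exact ⟨_, Finset.mem_union_left _ hdecr, h⟩
    · exact ⟨⟨3, p231⟩, Finset.mem_union_right _ (by decide), h⟩
    · exact ⟨⟨3, p312⟩, Finset.mem_union_right _ (by decide), h⟩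
    · exact ⟨⟨4, p2413⟩, Finset.mem_union_right _ (by decide), h⟩
    · exact ⟨⟨4, p3142⟩, Finset.mem_union_right _ (by decide), h⟩
    · exact ⟨⟨4, p4231⟩, Finset.mem_union_right _ (by decide), h⟩
  obtain ⟨B, hB, hBπ⟩ := hex
  exact ⟨B, ⟨hB, hBπ⟩, fun C hC => hC.2.sigma_eq hBπ (sumIndecomposable_of_mem_blocks hC.1)
    (sumIndecomposable_of_mem_blocks hB)⟩

theorem occEnumerator_succ_eq_sum_prefixEnumerator (hx : x ^ 2 = 0) (hy : y ^ 2 = 0) (n : ℕ) :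
    occEnumerator x y (n + 1) = ∑ B ∈ decreasingBlocks (n + 1) ∪ exceptionalBlocks,
      prefixEnumerator x y B.2 (n + 1) := by
  simp only [occEnumerator, prefixEnumerator, Finset.sum_filter]
  rw [Finset.sum_comm]
  refine Finset.sum_congr rfl fun π _ => ?_
  by_cases h : occCount p231 π ≤ 1 ∧ occCount p312 π ≤ 1
  · obtain ⟨B, ⟨hB, hBπ⟩, huniq⟩ := existsUnique_isPrefix h.1 h.2
    rw [Finset.sum_eq_single_of_mem B hB fun C hC hCB => if_neg fun hCπ => hCB (huniq C ⟨hC, hCπ⟩),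
      if_pos hBπ]
  · simp only [occWeight_eq_zero hx hy (π := π) (by omega), ite_self, Finset.sum_const_zero]

theorem sum_decreasingBlocks_prefixEnumerator (n : ℕ) :
    ∑ B ∈ decreasingBlocks n, prefixEnumerator x y B.2 n =
      ∑ j ∈ Finset.range n, occEnumerator x y j := by
  rw [decreasingBlocks, Finset.sum_image fun i _ j _ hij => by simpa using congrArg Sigma.fst hij,
    ← Finset.sum_range_reflect]
  refine Finset.sum_congr rfl fun j hj => ?_
  have hjn := Finset.mem_range.1 hj
  dsimp only
  rw [prefixEnumerator_of_le _ (by omega), occWeight_revPerm, one_mul]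
  congr 1
  omega

theorem sum_exceptionalBlocks_prefixEnumerator (n : ℕ) :
    ∑ B ∈ exceptionalBlocks, prefixEnumerator x y B.2 n =
      prefixEnumerator x y p231 n + prefixEnumerator x y p312 n + prefixEnumerator x y p2413 n +
        prefixEnumerator x y p3142 n + prefixEnumerator x y p4231 n := by
  rw [exceptionalBlocks, Finset.sum_insert (by decide), Finset.sum_insert (by decide),
    Finset.sum_insert (by decide), Finset.sum_insert (by decide), Finset.sum_singleton]
  simp only [add_assoc]

theorem occEnumerator_succ (hx : x ^ 2 = 0) (hy : y ^ 2 = 0) (n : ℕ) :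
    occEnumerator x y (n + 1) = ∑ j ∈ Finset.range (n + 1), occEnumerator x y j +
      ∑ B ∈ exceptionalBlocks, prefixEnumerator x y B.2 (n + 1) := by
  rw [occEnumerator_succ_eq_sum_prefixEnumerator hx hy,
    Finset.sum_union (disjoint_decreasingBlocks_exceptionalBlocks _),
    sum_decreasingBlocks_prefixEnumerator]

theorem occEnumerator_add_four (hx : x ^ 2 = 0) (hy : y ^ 2 = 0) (n : ℕ) :
    occEnumerator x y (n + 4) = ∑ j ∈ Finset.range (n + 4), occEnumerator x y j +
      (x + y) * occEnumerator x y (n + 1) + 3 * (x * y) * occEnumerator x y n := by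
  have three (B : Equiv.Perm (Fin 3)) : prefixEnumerator x y B (n + 4) =
      occWeight x y B * occEnumerator x y (n + 1) :=
    prefixEnumerator_of_le B (by omega)
  have four {B : Equiv.Perm (Fin 4)} (hB : B ∈ [p2413, p3142, p4231]) :
      prefixEnumerator x y B (n + 4) = x * y * occEnumerator x y n := by
    rw [prefixEnumerator_of_le B (by omega), occWeight_of_mem_length_four hB, Nat.add_sub_cancel]
  rw [occEnumerator_succ hx hy (n + 3), sum_exceptionalBlocks_prefixEnumerator, three, three,
    four (B := p2413) (by simp), four (B := p3142) (by simp), four (B := p4231) (by simp),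
    occWeight_p231, occWeight_p312]
  ring

theorem occEnumerator_zero : occEnumerator x y 0 = 1 := by
  rw [occEnumerator, Fintype.sum_unique, occWeight, occCount_eq_zero_of_lt _ _ (by decide),
    occCount_eq_zero_of_lt _ _ (by decide), pow_zero, pow_zero, mul_one]

theorem occEnumerator_succ_of_lt (hx : x ^ 2 = 0) (hy : y ^ 2 = 0) (hn : n < 2) :
    occEnumerator x y (n + 1) = ∑ j ∈ Finset.range (n + 1), occEnumerator x y j := by
  have three_le : ∀ B ∈ exceptionalBlocks, 3 ≤ B.1 := by decide
  have vanish : ∀ B ∈ exceptionalBlocks, prefixEnumerator x y B.2 (n + 1) = 0 := fun B hB =>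
    prefixEnumerator_of_lt (sumIndecomposable_of_mem_exceptionalBlocks B hB) n.succ_pos
      (by linarith [three_le B hB])
  rw [occEnumerator_succ hx hy, Finset.sum_eq_zero vanish, add_zero]

theorem occEnumerator_one (hx : x ^ 2 = 0) (hy : y ^ 2 = 0) : occEnumerator x y 1 = 1 := by
  rw [occEnumerator_succ_of_lt hx hy (by decide), Finset.sum_range_one, occEnumerator_zero]

theorem occEnumerator_two (hx : x ^ 2 = 0) (hy : y ^ 2 = 0) : occEnumerator x y 2 = 2 := by
  rw [occEnumerator_succ_of_lt hx hy (by decide), Finset.sum_range_succ, Finset.sum_range_one,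
    occEnumerator_zero, occEnumerator_one hx hy, one_add_one_eq_two]

theorem occEnumerator_three (hx : x ^ 2 = 0) (hy : y ^ 2 = 0) :
    occEnumerator x y 3 = 4 + (x + y) := by
  have three (B : Equiv.Perm (Fin 3)) : prefixEnumerator x y B 3 = occWeight x y B := by
    rw [prefixEnumerator_of_le B le_rfl, occEnumerator_zero, mul_one]
  have four {B : Equiv.Perm (Fin 4)} (hB : SumIndecomposable B) : prefixEnumerator x y B 3 = 0 :=
    prefixEnumerator_of_lt hB (by decide) (by decide)
  rw [occEnumerator_succ hx hy, sum_exceptionalBlocks_prefixEnumerator, three, three,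
    four (by decide), four (by decide), four (by decide), occWeight_p231, occWeight_p312,
    Finset.sum_range_succ, Finset.sum_range_succ, Finset.sum_range_one, occEnumerator_zero,
    occEnumerator_one hx hy, occEnumerator_two hx hy]
  ring

end Enumerator

section ClosedForm

variable {R : Type*} [CommRing R] {x y : R}

theorem occEnumerator_add_five (hx : x ^ 2 = 0) (hy : y ^ 2 = 0) (n : ℕ) :
    occEnumerator x y (n + 5) = 2 * occEnumerator x y (n + 4) +
      (x + y) * (occEnumerator x y (n + 2) - occEnumerator x y (n + 1)) +
      3 * (x * y) * (occEnumerator x y (n + 1) - occEnumerator x y n) := by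
  have h5 := occEnumerator_add_four hx hy (n + 1)
  rw [Finset.sum_range_succ] at h5
  linear_combination h5 - occEnumerator_add_four hx hy n

theorem occEnumerator_four (hx : x ^ 2 = 0) (hy : y ^ 2 = 0) :
    occEnumerator x y 4 = 8 + 2 * (x + y) + 3 * (x * y) := by
  rw [occEnumerator_add_four hx hy 0]
  simp only [Finset.sum_range_succ, Finset.sum_range_zero, occEnumerator_zero,
    occEnumerator_one hx hy, occEnumerator_two hx hy, occEnumerator_three hx hy]
  ring

theorem occEnumerator_five (hx : x ^ 2 = 0) (hy : y ^ 2 = 0) :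
    occEnumerator x y 5 = 16 + 5 * (x + y) + 6 * (x * y) := by
  rw [occEnumerator_add_five hx hy 0, occEnumerator_zero, occEnumerator_one hx hy,
    occEnumerator_two hx hy, occEnumerator_four hx hy]
  ring

theorem occEnumerator_six (hx : x ^ 2 = 0) (hy : y ^ 2 = 0) :
    occEnumerator x y 6 = 32 + 12 * (x + y) + 17 * (x * y) := by
  rw [occEnumerator_add_five hx hy 1, occEnumerator_one hx hy, occEnumerator_two hx hy,
    occEnumerator_three hx hy, occEnumerator_five hx hy]
  linear_combination hx + hy

theorem occEnumerator_seven (hx : x ^ 2 = 0) (hy : y ^ 2 = 0) :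
    occEnumerator x y 7 = 64 + 28 * (x + y) + 42 * (x * y) := by
  rw [occEnumerator_add_five hx hy 2, occEnumerator_two hx hy, occEnumerator_three hx hy,
    occEnumerator_four hx hy, occEnumerator_six hx hy]
  linear_combination (1 + 6 * y) * hx + (1 + 6 * x) * hy

theorem mul_mul_occEnumerator_succ (hx : x ^ 2 = 0) (hy : y ^ 2 = 0) :
    ∀ n, x * y * occEnumerator x y (n + 1) = 2 ^ n * (x * y)
  | 0 => by rw [occEnumerator_one hx hy]; ring
  | 1 => by rw [occEnumerator_two hx hy]; ring
  | 2 => by rw [occEnumerator_three hx hy]; linear_combination y * hx + x * hy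
  | 3 => by
    rw [occEnumerator_four hx hy]
    linear_combination (2 * y + 3 * y ^ 2) * hx + 2 * x * hy
  | n + 4 => by
    rw [occEnumerator_add_five hx hy n]
    have ih := mul_mul_occEnumerator_succ hx hy (n + 3)
    linear_combination 2 * ih +
      (y * hx + x * hy) * (occEnumerator x y (n + 2) - occEnumerator x y (n + 1)) +
      3 * y ^ 2 * hx * (occEnumerator x y (n + 1) - occEnumerator x y n)

theorem add_mul_occEnumerator_add_four (hx : x ^ 2 = 0) (hy : y ^ 2 = 0) (n : ℕ) :
    (x + y) * occEnumerator x y (n + 4) = 2 ^ (n + 3) * (x + y) + (n + 4) * 2 ^ n * (x * y) := by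
  induction n with
  | zero =>
    rw [occEnumerator_four hx hy]
    push_cast
    linear_combination (2 + 3 * y) * hx + (2 + 3 * x) * hy
  | succ n ih =>
    rw [occEnumerator_add_five hx hy n]
    have h1 := mul_mul_occEnumerator_succ hx hy n
    have h2 := mul_mul_occEnumerator_succ hx hy (n + 1)
    push_cast
    linear_combination 2 * ih + 2 * h2 - 2 * h1 +
      (hx + hy) * (occEnumerator x y (n + 2) - occEnumerator x y (n + 1)) +
      3 * (y * hx + x * hy) * (occEnumerator x y (n + 1) - occEnumerator x y n)

theorem four_mul_occEnumerator_add_seven (hx : x ^ 2 = 0) (hy : y ^ 2 = 0) (n : ℕ) :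
    4 * occEnumerator x y (n + 7) = 2 ^ n * (256 + 16 * (n + 7) * (x + y) +
      ((n + 7) ^ 2 + 21 * (n + 7) - 28) * (x * y)) := by
  induction n with
  | zero =>
    rw [occEnumerator_seven hx hy]
    push_cast
    ring
  | succ n ih =>
    rw [occEnumerator_add_five hx hy (n + 3)]
    have hs4 := add_mul_occEnumerator_add_four hx hy n
    have hs5 := add_mul_occEnumerator_add_four hx hy (n + 1)
    have hp3 := mul_mul_occEnumerator_succ hx hy (n + 2)
    have hp4 := mul_mul_occEnumerator_succ hx hy (n + 3)
    push_cast at hs5 ⊢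
    linear_combination 2 * ih + 4 * (hs5 - hs4) + 12 * (hp4 - hp3)

end ClosedForm

section Coefficient

open DualNumber TrivSqZeroExt

variable {n : ℕ}

theorem snd_eps_pow_mul_inl_pow {R : Type*} [CommSemiring R] (a : R) (i j : ℕ) :
    ((ε : R[ε]) ^ i * inl a ^ j).snd = if i = 1 then a ^ j else 0 := by
  rcases i with _ | _ | i <;> simp [pow_succ, mul_assoc]

theorem snd_eps_pow {R : Type*} [CommSemiring R] (i : ℕ) :
    ((ε : R[ε]) ^ i).snd = if i = 1 then 1 else 0 := by
  simpa using snd_eps_pow_mul_inl_pow (1 : R) i 0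

theorem snd_snd_eps_pow_mul_inl_eps_pow {R : Type*} [CommSemiring R] (i j : ℕ) :
    ((ε : R[ε][ε]) ^ i * inl (ε : R[ε]) ^ j).snd.snd = if i = 1 ∧ j = 1 then 1 else 0 := by
  rw [snd_eps_pow_mul_inl_pow, apply_ite snd, snd_eps_pow, snd_zero, ← ite_and]

theorem sContainBoth_eq_snd_snd (n : ℕ) :
    (sContainBoth p231 p312 n : ℤ) =
      (occEnumerator (ε : ℤ[ε][ε]) (inl (ε : ℤ[ε])) n).snd.snd := by
  simp only [sContainBoth, containsOnce]
  rw [Nat.card_eq_fintype_card, Fintype.card_subtype, ← Finset.sum_boole, occEnumerator, snd_sum,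
    snd_sum]
  exact Finset.sum_congr rfl fun π _ => (snd_snd_eps_pow_mul_inl_eps_pow _ _).symm

theorem mul_sContainBoth_eq {a b c d : ℤ}
    (h : ∀ {R : Type} [CommRing R] {x y : R}, x ^ 2 = 0 → y ^ 2 = 0 →
      d * occEnumerator x y n = a + b * (x + y) + c * (x * y)) :
    d * (sContainBoth p231 p312 n : ℤ) = c := by
  have hx : (ε : ℤ[ε][ε]) ^ 2 = 0 := by rw [pow_two, eps_mul_eps]
  have hy : (inl (ε : ℤ[ε]) : ℤ[ε][ε]) ^ 2 = 0 := by rw [pow_two, ← inl_mul, eps_mul_eps, inl_zero]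
  simpa [sContainBoth_eq_snd_snd] using congrArg (fun z => z.snd.snd) (h hx hy)

theorem sContainBoth_p231_p312_four : sContainBoth p231 p312 4 = 3 := by
  have h := mul_sContainBoth_eq (n := 4) (a := 8) (b := 2) (c := 3) (d := 1) fun hx hy => by
    rw [occEnumerator_four hx hy]; push_cast; ring
  omega

theorem sContainBoth_p231_p312_five : sContainBoth p231 p312 5 = 6 := by
  have h := mul_sContainBoth_eq (n := 5) (a := 16) (b := 5) (c := 6) (d := 1) fun hx hy => by
    rw [occEnumerator_five hx hy]; push_cast; ring
  omega

theorem sContainBoth_p231_p312_six : sContainBoth p231 p312 6 = 17 := by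
  have h := mul_sContainBoth_eq (n := 6) (a := 32) (b := 12) (c := 17) (d := 1) fun hx hy => by
    rw [occEnumerator_six hx hy]; push_cast; ring
  omega

theorem four_mul_sContainBoth_p231_p312_add_seven (n : ℕ) :
    4 * (sContainBoth p231 p312 (n + 7) : ℤ) = 2 ^ n * ((n + 7) ^ 2 + 21 * (n + 7) - 28) :=
  mul_sContainBoth_eq (a := 2 ^ n * 256) (b := 2 ^ n * (16 * (n + 7))) fun hx hy => by
    push_cast
    linear_combination four_mul_occEnumerator_add_seven hx hy n

end Coefficient

theorem sContainBoth_p231_p312 {n : ℕ} (hn : 7 ≤ n) :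
    2 ^ 9 * sContainBoth p231 p312 n = (n ^ 2 + 21 * n - 28) * 2 ^ n := by
  obtain ⟨n, rfl⟩ := Nat.exists_eq_add_of_le' hn
  have h := four_mul_sContainBoth_p231_p312_add_seven n
  zify [show 28 ≤ (n + 7) ^ 2 + 21 * (n + 7) by nlinarith]
  linear_combination 2 ^ 7 * h

theorem sContainBoth_p132_p213 (n : ℕ) : sContainBoth p132 p213 n = sContainBoth p231 p312 n := by
  rw [← sContainBoth_mul_revPerm]
  congr 1 <;> decide

/-- Theorem 5.3: for each listed pair `{α,β}`, `s_n(∅;{α,β}) = (n²+21n−28)·2^{n−9}`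
for `n ≥ 7` (stated in the equivalent truncation-free form
`2⁹·s_n(∅;{α,β}) = (n²+21n−28)·2ⁿ`), with `s_6 = 17`, `s_5 = 6`, and `s_4 = 3`. -/
theorem sContainBoth_eq_of_mem_classI :
    ∀ p ∈ [(p132, p213), (p231, p312)],
      (∀ n : ℕ, 7 ≤ n →
          2 ^ 9 * sContainBoth p.1 p.2 n = (n ^ 2 + 21 * n - 28) * 2 ^ n) ∧
        sContainBoth p.1 p.2 6 = 17 ∧
        sContainBoth p.1 p.2 5 = 6 ∧
        sContainBoth p.1 p.2 4 = 3 := by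
  intro p hp
  have hreduce (n : ℕ) : sContainBoth p.1 p.2 n = sContainBoth p231 p312 n := by
    rcases List.mem_pair.1 hp with rfl | rfl
    · exact sContainBoth_p132_p213 n
    · rfl
  simp only [hreduce]
  exact ⟨fun n hn => sContainBoth_p231_p312 hn, sContainBoth_p231_p312_six,
    sContainBoth_p231_p312_five, sContainBoth_p231_p312_four⟩
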